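/- Let (X,T) be an odometer system and let S be a bounded speedup of T with jump function p which is minimal, and let c be the orbit number of the speedup. Then p − c is an S-coboundary: there exists a continuous function f : X → ℤ such that p(x) − c = f(x) − f(S(x)) for all x ∈ X. -/

import Mathlib

/-- A minimal Cantor-type dynamical system: every `T`-orbit (over `ℤ`) is dense. -/
def IsMinimalHomeo {X : Type*} [TopologicalSpace X] (T : Equiv.Perm X) : Prop :=
  ∀ x : X, Dense (Set.range fun n : ℤ => (T ^ n) x)

/-- The (two-sided) orbit of a point under a bijection. -/
def zOrbit {X : Type*} (T : Equiv.Perm X) (x : X) : Set X :=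
  Set.range fun n : ℤ => (T ^ n) x

/-- `c` is the orbit number of the speedup `S` of `T`: every `T`-orbit is the union of
exactly `c` distinct `S`-orbits. -/
def IsOrbitNumber {X : Type*} (T S : Equiv.Perm X) (c : ℕ) : Prop :=
  0 < c ∧ ∀ x : X,
    {O : Set X | (∃ y : X, O = zOrbit S y) ∧ O ⊆ zOrbit T x}.ncard = c


/-- Odometer data for `(X,T)`: nested cyclic Kakutani–Rokhlin partitions
`P(k) = {T^i A(k) : 0 ≤ i < m k}` which refine each other and separate points. -/
def IsOdometerData {X : Type*} [TopologicalSpace X] (T : Equiv.Perm X)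
    (m : ℕ → ℕ) (A : ℕ → Set X) : Prop :=
  (2 ≤ m 0) ∧ (∀ k, m k ∣ m (k + 1)) ∧ (∀ k, 2 * m k ≤ m (k + 1)) ∧
  (∀ k, (A k).Nonempty ∧ IsClopen (A k)) ∧
  (∀ k, ∀ i < m k, ∀ j < m k, i ≠ j →
    Disjoint ((⇑(T ^ i)) '' A k) ((⇑(T ^ j)) '' A k)) ∧
  (∀ k, (⋃ i < m k, (⇑(T ^ i)) '' A k) = Set.univ) ∧
  (∀ k, (⇑(T ^ m k)) '' A k = A k) ∧
  (∀ k, ∀ i < m (k + 1), ∃ j < m k, (⇑(T ^ i)) '' A (k + 1) ⊆ (⇑(T ^ j)) '' A k) ∧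
  (∀ x y : X, x ≠ y → ∃ k, ∀ i < m k,
    ¬(x ∈ (⇑(T ^ i)) '' A k ∧ y ∈ (⇑(T ^ i)) '' A k))

/-- Summing along one period of a full cycle gives the sum over the whole type. -/
lemma sum_range_pow_of_isCycleOn {α β : Type*} [Fintype α] [AddCommMonoid β]
    {σ : Equiv.Perm α} (hσ : σ.IsCycleOn (Finset.univ : Finset α)) (a : α) (h : α → β) :
    ∑ j ∈ Finset.range (Fintype.card α), h ((σ ^ j) a) = ∑ b, h b := by
  refine Finset.sum_bij (fun j _ => (σ ^ j) a) (fun _ _ => Finset.mem_univ _) ?_ ?_ fun _ _ => rfl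
  · intro i hi j hj hij
    have hmod := (hσ.pow_apply_eq_pow_apply (Finset.mem_univ a)).1 hij
    exact hmod.eq_of_lt_of_lt (Finset.mem_range.1 hi) (Finset.mem_range.1 hj)
  · intro b _
    obtain ⟨i, hi, hib⟩ := hσ.exists_pow_eq (Finset.mem_univ a) (Finset.mem_univ b)
    exact ⟨i, Finset.mem_range.2 hi, hib⟩

/-- A map semiconjugating two permutations semiconjugates all their integer powers. -/
lemma map_zpow_of_semiconj {X Y : Type*} {S : Equiv.Perm X} {σ : Equiv.Perm Y} {L : X → Y}
    (h : ∀ x, L (S x) = σ (L x)) (n : ℤ) (x : X) : L ((S ^ n) x) = (σ ^ n) (L x) := by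
  have hsymm : ∀ x, L (S.symm x) = σ.symm (L x) := fun x => by
    rw [Equiv.eq_symm_apply, ← h, Equiv.apply_symm_apply]
  induction n with
  | zero => simp
  | succ i ih =>
    rw [add_comm, zpow_one_add, zpow_one_add, Equiv.Perm.mul_apply, Equiv.Perm.mul_apply, h, ih]
  | pred i ih =>
    rw [sub_eq_neg_add, zpow_add, zpow_add, Equiv.Perm.mul_apply, Equiv.Perm.mul_apply,
      zpow_neg_one, zpow_neg_one, Equiv.Perm.inv_def, Equiv.Perm.inv_def, hsymm, ih]

/-- Moving along an orbit does not change it. -/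
lemma zOrbit_zpow {X : Type*} (S : Equiv.Perm X) (n : ℤ) (x : X) :
    zOrbit S ((S ^ n) x) = zOrbit S x := by
  unfold zOrbit
  simp only [← Equiv.Perm.mul_apply, ← zpow_add]
  exact (Equiv.addRight n).surjective.range_comp fun k : ℤ => (S ^ k) x

/-- A function of total sum zero is a coboundary for a full cycle on a finite type. -/
lemma exists_coboundary_of_sum_eq_zero {α : Type*} [Fintype α] [Nonempty α]
    {σ : Equiv.Perm α} (hσ : σ.IsCycleOn (Finset.univ : Finset α)) (h : α → ℤ)
    (hsum : ∑ a, h a = 0) : ∃ F : α → ℤ, ∀ a, h a = F a - F (σ a) := by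
  classical
  obtain ⟨a₀⟩ := ‹Nonempty α›
  have hrange : ∑ j ∈ Finset.range (Fintype.card α), h ((σ ^ j) a₀) = 0 := by
    rw [← hsum]
    exact sum_range_pow_of_isCycleOn hσ a₀ h
  have key : ∀ i j : ℕ, (σ ^ i) a₀ = (σ ^ j) a₀ →
      ∑ l ∈ Finset.range i, h ((σ ^ l) a₀) = ∑ l ∈ Finset.range j, h ((σ ^ l) a₀) := by
    have aux : ∀ i t : ℕ, ∑ l ∈ Finset.range (i + Fintype.card α * t), h ((σ ^ l) a₀) =
        ∑ l ∈ Finset.range i, h ((σ ^ l) a₀) := by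
      intro i t
      have hper : (σ ^ (Fintype.card α * t)) a₀ = a₀ :=
        (hσ.pow_apply_eq (Finset.mem_univ a₀)).2 (Dvd.intro t rfl)
      have hzero : ∀ t : ℕ,
          ∑ l ∈ Finset.range (Fintype.card α * t), h ((σ ^ l) a₀) = 0 := by
        intro t
        induction t with
        | zero => simp
        | succ t ih =>
          have hper : (σ ^ (Fintype.card α * t)) a₀ = a₀ :=
            (hσ.pow_apply_eq (Finset.mem_univ a₀)).2 (Dvd.intro t rfl)
          rw [mul_add, mul_one, Finset.sum_range_add, ih, zero_add, ← hrange]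
          refine Finset.sum_congr rfl fun l _ => ?_
          rw [add_comm, pow_add, Equiv.Perm.mul_apply, hper]
      rw [add_comm, Finset.sum_range_add, hzero, zero_add]
      refine Finset.sum_congr rfl fun l _ => ?_
      rw [add_comm, pow_add, Equiv.Perm.mul_apply, hper]
    intro i j hij
    have hmod := (hσ.pow_apply_eq_pow_apply (Finset.mem_univ a₀)).1 hij
    rw [Finset.card_univ] at hmod
    unfold Nat.ModEq at hmod
    rw [← Nat.mod_add_div i (Fintype.card α), ← Nat.mod_add_div j (Fintype.card α), aux, aux, hmod]
  have hex : ∀ a, ∃ i : ℕ, (σ ^ i) a₀ = a := fun a => by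
    obtain ⟨i, -, hi⟩ := hσ.exists_pow_eq (Finset.mem_univ a₀) (Finset.mem_univ a)
    exact ⟨i, hi⟩
  choose n hn using hex
  refine ⟨fun a => -∑ l ∈ Finset.range (n a), h ((σ ^ l) a₀), fun a => ?_⟩
  have hstep : (σ ^ n (σ a)) a₀ = (σ ^ (n a + 1)) a₀ := by
    rw [hn, pow_succ', Equiv.Perm.mul_apply, hn]
  dsimp only
  rw [key _ _ hstep, Finset.sum_range_succ, hn]
  ring

/-- A tower of height `N` for `T` gives a continuous equivariant map to `ZMod N` whose fibres are
the levels of the tower. -/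
lemma exists_level_map {X : Type*} [TopologicalSpace X] {T : Equiv.Perm X}
    (hTc' : Continuous T.symm) {N : ℕ} [NeZero N] {A : Set X} (hA : IsClopen A)
    (hdisj : ∀ i < N, ∀ j < N, i ≠ j →
      Disjoint ((⇑(T ^ i)) '' A) ((⇑(T ^ j)) '' A))
    (hcover : (⋃ i < N, (⇑(T ^ i)) '' A) = Set.univ)
    (hreturn : (⇑(T ^ N)) '' A = A) :
    ∃ L : X → ZMod N, Continuous L ∧ (∀ x, L (T x) = L x + 1) ∧
      ∀ x, ∀ i < N, L x = i ↔ x ∈ (⇑(T ^ i)) '' A := by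
  have hex : ∀ x, ∃ i < N, x ∈ (⇑(T ^ i)) '' A := fun x => by
    have hx : x ∈ ⋃ i < N, (⇑(T ^ i)) '' A := hcover ▸ Set.mem_univ x
    simpa only [Set.mem_iUnion, exists_prop] using hx
  choose n hnN hn using hex
  have hval : ∀ x, ∀ i < N, ((n x : ℕ) : ZMod N) = i ↔ x ∈ (⇑(T ^ i)) '' A := by
    intro x i hi
    rw [ZMod.natCast_eq_natCast_iff', Nat.mod_eq_of_lt (hnN x), Nat.mod_eq_of_lt hi]
    refine ⟨fun h => h ▸ hn x, fun h => ?_⟩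
    by_contra hne
    exact Set.disjoint_left.1 (hdisj _ (hnN x) _ hi hne) (hn x) h
  refine ⟨fun x => (n x : ZMod N), ?_, fun x => ?_, hval⟩
  · rw [continuous_discrete_rng]
    intro a
    have hpre : (fun x => (n x : ZMod N)) ⁻¹' {a} = (⇑(T ^ a.val)) '' A := by
      ext x
      rw [← hval x a.val (ZMod.val_lt a), ZMod.natCast_zmod_val]
      rfl
    have hsymm : Continuous ⇑(T ^ a.val).symm := by
      have heq : ⇑(T ^ a.val).symm = (⇑T.symm)^[a.val] := by
        rw [← Equiv.Perm.coe_pow, ← Equiv.Perm.inv_def, ← Equiv.Perm.inv_def, inv_pow]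
      exact heq ▸ hTc'.iterate _
    rw [hpre, Equiv.image_eq_preimage_symm]
    exact hA.isOpen.preimage hsymm
  · obtain ⟨y, hy, hyx⟩ := hn x
    have hTx : (T ^ (n x + 1)) y = T x := by
      rw [pow_succ', Equiv.Perm.mul_apply, hyx]
    rcases Nat.lt_or_ge (n x + 1) N with hlt | hge
    · have := (hval (T x) (n x + 1) hlt).2 ⟨y, hy, hTx⟩
      simpa using this
    · have hN : n x + 1 = N := le_antisymm (hnN x) hge
      have hmem : T x ∈ A := by
        rw [← hreturn]
        exact ⟨y, hy, hN ▸ hTx⟩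
      have h0 := (hval (T x) 0 (NeZero.pos N)).2 ⟨T x, hmem, by simp⟩
      have h1 : ((n x + 1 : ℕ) : ZMod N) = 0 := by rw [hN, ZMod.natCast_self]
      push_cast at h0 h1
      simp only [h0, h1]

/-- A map to `ZMod N` equivariant under `T` intertwines `T ^ n` with translation by `n`. -/
lemma level_zpow {X : Type*} {T : Equiv.Perm X} {N : ℕ} {L : X → ZMod N}
    (hL : ∀ x, L (T x) = L x + 1) (n : ℤ) (x : X) : L ((T ^ n) x) = L x + n := by
  induction n with
  | zero => simp
  | succ i ih =>
    rw [add_comm, zpow_add, Equiv.Perm.mul_apply, zpow_one, hL, ih]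
    push_cast
    ring
  | pred i ih =>
    have h := hL ((T ^ (-(i : ℤ) - 1)) x)
    rw [← Equiv.Perm.mul_apply, ← zpow_one_add, add_sub_cancel, ih] at h
    push_cast at h ⊢
    linear_combination -h

/-- If the fibres of the jump function are unions of levels of a tower on which the speedup acts as
a full cycle, then the orbit number is the mean of the jump function over the levels. -/
lemma sum_jump_eq_card_mul_orbitNumber {X : Type*} [Nonempty X] {T S : Equiv.Perm X}
    (haper : ∀ (n : ℤ) (x : X), (T ^ n) x = x → n = 0) {N : ℕ} [NeZero N] {L : X → ZMod N}
    (hLT : ∀ x, L (T x) = L x + 1) {q : ZMod N → ℕ} (hq : ∀ a, 1 ≤ q a)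
    (hS : ∀ x, S x = (T ^ q (L x)) x) {σ : Equiv.Perm (ZMod N)} (hLS : ∀ x, L (S x) = σ (L x))
    (hσ : σ.IsCycleOn (Finset.univ : Finset (ZMod N))) {c : ℕ} (hc : IsOrbitNumber T S c) :
    ∑ a, q a = N * c := by
  obtain ⟨x⟩ := ‹Nonempty X›
  set d := ∑ a, q a
  have hiter : ∀ (n : ℕ) (y : X), (S ^ n) y =
      (T ^ ∑ j ∈ Finset.range n, q ((σ ^ j) (L y))) y ∧ L ((S ^ n) y) = (σ ^ n) (L y) := by
    intro n y
    induction n with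
    | zero => simp
    | succ n ih =>
      constructor
      · rw [pow_succ', Equiv.Perm.mul_apply, hS, ih.2, ih.1, ← Equiv.Perm.mul_apply, ← pow_add,
          Finset.sum_range_succ, add_comm]
      · rw [pow_succ', Equiv.Perm.mul_apply, hLS, ih.2, pow_succ', Equiv.Perm.mul_apply]
  have hSN : S ^ N = T ^ d := by
    ext y
    rw [(hiter N y).1]
    have hsum := sum_range_pow_of_isCycleOn hσ (L y) q
    rw [ZMod.card] at hsum
    rw [hsum]
  have hdN : N ∣ d := by
    have h1 : L ((S ^ N) x) = L x := by
      rw [(hiter N x).2]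
      refine (hσ.pow_apply_eq (Finset.mem_univ _)).2 ?_
      rw [Finset.card_univ, ZMod.card]
    rw [hSN, ← zpow_natCast, level_zpow hLT] at h1
    rw [← ZMod.natCast_eq_zero_iff]
    simpa using h1
  obtain ⟨e, he⟩ := hdN
  have hd0 : 0 < d := Finset.sum_pos (fun a _ => hq a) Finset.univ_nonempty
  have he0 : 0 < e := Nat.pos_of_mul_pos_left (he ▸ hd0)
  have hN0 : (N : ℤ) ≠ 0 := by exact_mod_cast NeZero.ne N
  have hSNz : ∀ a : ℤ, S ^ ((N : ℤ) * a) = T ^ ((N : ℤ) * (e * a)) := by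
    intro a
    rw [zpow_mul, zpow_natCast, hSN, he, ← zpow_natCast, ← zpow_mul]
    push_cast
    rw [mul_assoc]
  rw [he]
  congr 1
  rw [← hc.2 x]
  have himage : {O : Set X | (∃ y : X, O = zOrbit S y) ∧ O ⊆ zOrbit T x} =
      (fun j : ℕ => zOrbit S ((T ^ ((N : ℤ) * j)) x)) '' (Finset.range e : Set ℕ) := by
    ext O
    simp only [Set.mem_ofPred_eq, Set.mem_image, Finset.coe_range, Set.mem_Iio]
    constructor
    · rintro ⟨⟨y, rfl⟩, hsub⟩
      obtain ⟨i, -, hi⟩ := hσ.exists_pow_eq (Finset.mem_univ (L y)) (Finset.mem_univ (L x))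
      obtain ⟨n, hn⟩ := hsub ⟨i, rfl⟩
      simp only [zpow_natCast] at hn
      have hLn : L ((T ^ n) x) = L x := by rw [hn, (hiter i y).2, hi]
      rw [level_zpow hLT, add_eq_left, ZMod.intCast_zmod_eq_zero_iff_dvd] at hLn
      obtain ⟨b, rfl⟩ := hLn
      have he1 : (0 : ℤ) < e := by exact_mod_cast he0
      refine ⟨(b % e).toNat, ?_, ?_⟩
      · have := Int.emod_lt_of_pos b he1
        omega
      · rw [Int.toNat_of_nonneg (Int.emod_nonneg b he1.ne')]
        have hy : y = (S ^ ((N : ℤ) * (b / e) - i)) ((T ^ ((N : ℤ) * (b % e))) x) := by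
          rw [sub_eq_neg_add, zpow_add, Equiv.Perm.mul_apply, hSNz, ← Equiv.Perm.mul_apply (T ^ _),
            ← zpow_add, ← mul_add, add_comm, Int.emod_add_mul_ediv, hn, zpow_neg, zpow_natCast,
            Equiv.Perm.inv_def, Equiv.symm_apply_apply]
        rw [hy, zOrbit_zpow]
    · rintro ⟨j, -, rfl⟩
      refine ⟨⟨_, rfl⟩, ?_⟩
      have hmem : ∀ k : ℤ, ∀ y, ∃ n : ℤ, (S ^ k) y = (T ^ n) y := by
        intro k y
        cases k with
        | ofNat k =>
          exact ⟨_, by rw [Int.ofNat_eq_natCast, zpow_natCast, (hiter k y).1, zpow_natCast]⟩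
        | negSucc k =>
          have h := (hiter (k + 1) ((S ^ (Int.negSucc k)) y)).1
          refine ⟨-(∑ j ∈ Finset.range (k + 1),
            q ((σ ^ j) (L ((S ^ (Int.negSucc k)) y))) : ℕ), ?_⟩
          rw [zpow_neg, Equiv.Perm.eq_inv_iff_eq, zpow_natCast, ← h, zpow_negSucc,
            Equiv.Perm.inv_def, Equiv.apply_symm_apply]
      rintro _ ⟨k, rfl⟩
      obtain ⟨n, hn⟩ := hmem k ((T ^ ((N : ℤ) * j)) x)
      refine ⟨n + (N : ℤ) * j, ?_⟩
      dsimp only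
      rw [hn, zpow_add, Equiv.Perm.mul_apply]
  rw [himage, Set.InjOn.ncard_image, Set.ncard_coe_finset, Finset.card_range]
  intro i hi j hj hij
  simp only [Finset.coe_range, Set.mem_Iio] at hi hj
  dsimp only at hij
  have hmem : (T ^ ((N : ℤ) * i)) x ∈ zOrbit S ((T ^ ((N : ℤ) * j)) x) := hij ▸ ⟨0, by simp⟩
  obtain ⟨k, hk⟩ := hmem
  dsimp only at hk
  have hLk := congrArg L hk
  rw [map_zpow_of_semiconj hLS, level_zpow hLT, level_zpow hLT] at hLk
  simp only [Int.cast_mul, Int.cast_natCast, CharP.cast_eq_zero, zero_mul, add_zero] at hLk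
  rw [hσ.zpow_apply_eq (Finset.mem_univ _), Finset.card_univ, ZMod.card] at hLk
  obtain ⟨a, rfl⟩ := hLk
  rw [hSNz, ← Equiv.Perm.mul_apply, ← zpow_add] at hk
  have h0 : (T ^ ((N : ℤ) * (e * a) + N * j - N * i)) x = x := by
    rw [sub_eq_neg_add, zpow_add, Equiv.Perm.mul_apply, hk, zpow_neg, Equiv.Perm.inv_def,
      Equiv.symm_apply_apply]
  have h1 := haper _ _ h0
  have h2 : (e : ℤ) * a + j - i = 0 :=
    (mul_eq_zero.1 (show (N : ℤ) * (e * a + j - i) = 0 by linarith)).resolve_left hN0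
  have h3 : (i : ℤ) % e = (j : ℤ) % e := by
    rw [show (i : ℤ) = j + e * a by linarith, Int.add_mul_emod_self_left]
  rw [Int.emod_eq_of_lt (by omega) (by omega), Int.emod_eq_of_lt (by omega) (by omega)] at h3
  exact_mod_cast h3

/-- The jump function of a bounded speedup of an aperiodic homeomorphism is continuous. -/
lemma continuous_jump {X : Type*} [TopologicalSpace X] [T2Space X] {T S : Equiv.Perm X}
    (haper : ∀ (n : ℤ) (x : X), (T ^ n) x = x → n = 0) (hTc : Continuous T) (hSc : Continuous S)
    {p : X → ℕ} {M : ℕ} (hM : ∀ x, p x ≤ M) (hSp : ∀ x, S x = (T ^ p x) x) : Continuous p := by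
  rw [continuous_iff_isClosed]
  intro s _
  have hpre : p ⁻¹' s = ⋃ n ∈ s ∩ Set.Iic M, {x | S x = (T ^ n) x} := by
    ext x
    simp only [Set.mem_preimage, Set.mem_iUnion, Set.mem_inter_iff, Set.mem_Iic, Set.mem_ofPred_eq,
      exists_prop]
    refine ⟨fun hx => ⟨p x, ⟨hx, hM x⟩, hSp x⟩, ?_⟩
    rintro ⟨n, ⟨hns, -⟩, hn⟩
    have h := haper (-(n : ℤ) + p x) x (by
      rw [zpow_add, Equiv.Perm.mul_apply, zpow_natCast, ← hSp, hn, zpow_neg, zpow_natCast,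
        Equiv.Perm.inv_def, Equiv.symm_apply_apply])
    rwa [show p x = n by omega]
  rw [hpre]
  refine ((Set.finite_Iic M).inter_of_right s).isClosed_biUnion fun n _ => ?_
  refine isClosed_eq hSc ?_
  rw [Equiv.Perm.coe_pow]
  exact hTc.iterate n

/-- If `S` is a minimal bounded speedup of an odometer `(X,T)` with jump
function `p` and orbit number `c`, then `p - c` is an `S`-coboundary. -/
theorem boundedSpeedup_of_odometer_S_coboundary
    {X : Type*} [TopologicalSpace X] [CompactSpace X]
    [TopologicalSpace.MetrizableSpace X] [TotallyDisconnectedSpace X] [PerfectSpace X]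
    [Nonempty X]
    (T : Equiv.Perm X) (hTc : Continuous T) (hTc' : Continuous T.symm)
    (hTmin : IsMinimalHomeo T)
    (hodo : ∃ (m : ℕ → ℕ) (A : ℕ → Set X), IsOdometerData T m A)
    (p : X → ℕ) (hp1 : ∀ x, 1 ≤ p x) (hpbdd : ∃ M : ℕ, ∀ x, p x ≤ M)
    (S : Equiv.Perm X) (hSc : Continuous S) (hSc' : Continuous S.symm)
    (hSp : ∀ x, S x = (T ^ p x) x) (hSmin : IsMinimalHomeo S)
    (c : ℕ) (hc : IsOrbitNumber T S c) :
    ∃ f : X → ℤ, Continuous f ∧ ∀ x : X, (p x : ℤ) - c = f x - f (S x) := by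
  obtain ⟨m, A, hm0, -, hgrow, hA, hdisj, hcover, hreturn, hrefine, hsep⟩ := hodo
  obtain ⟨M, hM⟩ := hpbdd
  have hmk : ∀ k, k < m k := by
    intro k
    induction k with
    | zero => omega
    | succ k ih => have := hgrow k; omega
  have hne : ∀ k, NeZero (m k) := fun k => ⟨(Nat.zero_le k |>.trans_lt (hmk k)).ne'⟩
  have hlevel := fun k => exists_level_map hTc' (hA k).2 (hdisj k) (hcover k) (hreturn k)
  choose L hLc hLT hLA using hlevel
  have haper : ∀ (n : ℤ) (x : X), (T ^ n) x = x → n = 0 := by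
    intro n x hn
    have hdvdn : (m n.natAbs : ℤ) ∣ n := by
      have h := level_zpow (hLT n.natAbs) n x
      rw [hn, left_eq_add, ZMod.intCast_zmod_eq_zero_iff_dvd] at h
      exact h
    refine Int.eq_zero_of_abs_lt_dvd hdvdn ?_
    rw [Int.abs_eq_natAbs]
    exact_mod_cast hmk n.natAbs
  have hpc : Continuous p := continuous_jump haper hTc hSc hM hSp
  have hLmono : ∀ k x y, L (k + 1) x = L (k + 1) y → L k x = L k y := by
    intro k x y hxy
    have hx : L (k + 1) x = ((L (k + 1) x).val : ZMod (m (k + 1))) := by simp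
    have hlt := ZMod.val_lt (L (k + 1) x)
    obtain ⟨j, hj, hsub⟩ := hrefine k _ hlt
    rw [(hLA k x j hj).2 (hsub ((hLA (k + 1) x _ hlt).1 hx)),
      (hLA k y j hj).2 (hsub ((hLA (k + 1) y _ hlt).1 (hxy ▸ hx)))]
  obtain ⟨k, hk⟩ : ∃ k, ∀ x y, L k x = L k y → p x = p y := by
    have hcomp : IsCompact {z : X × X | p z.1 ≠ p z.2} :=
      (isClosed_discrete {w : ℕ × ℕ | w.1 ≠ w.2}).preimage
        ((hpc.comp continuous_fst).prodMk (hpc.comp continuous_snd)) |>.isCompact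
    have hopen : ∀ k, IsOpen {z : X × X | L k z.1 ≠ L k z.2} := fun k =>
      isOpen_ne_fun ((hLc k).comp continuous_fst) ((hLc k).comp continuous_snd)
    have hmono : Monotone fun k => {z : X × X | L k z.1 ≠ L k z.2} :=
      monotone_nat_of_le_succ fun k z hz h => hz (hLmono k _ _ h)
    obtain ⟨k, hk⟩ := hcomp.elim_directed_cover _ hopen (fun z hz => by
      obtain ⟨k, hk⟩ := hsep z.1 z.2 fun h => hz (congrArg p h)
      refine Set.mem_iUnion.2 ⟨k, fun h => hk (L k z.1).val (ZMod.val_lt _) ⟨?_, ?_⟩⟩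
      · rw [← hLA k _ _ (ZMod.val_lt _), ZMod.natCast_zmod_val]
      · rw [← hLA k _ _ (ZMod.val_lt _), ZMod.natCast_zmod_val, h]) hmono.directed_le
    exact ⟨k, fun x y hxy => by
      by_contra h
      exact hk (show (x, y) ∈ _ from h) hxy⟩
  have hSurj : Function.Surjective (L k) := fun a => by
    obtain ⟨y⟩ := ‹Nonempty X›
    refine ⟨(T ^ ((a - L k y).val : ℤ)) y, ?_⟩
    rw [level_zpow (hLT k)]
    simp
  obtain ⟨q, hq⟩ : ∃ q : ZMod (m k) → ℕ, ∀ x, p x = q (L k x) :=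
    ⟨fun a => p (Function.surjInv hSurj a), fun x =>
      hk _ _ (Function.surjInv_eq hSurj (L k x)).symm⟩
  have hLS : ∀ x, L k (S x) = L k x + q (L k x) := fun x => by
    rw [hSp, ← zpow_natCast, level_zpow (hLT k), hq, Int.cast_natCast]
  have hbij : Function.Bijective fun a : ZMod (m k) => a + q a := by
    refine Finite.surjective_iff_bijective.1 fun a => ?_
    obtain ⟨x, rfl⟩ := hSurj a
    exact ⟨L k (S.symm x), by simp only [← hLS, Equiv.apply_symm_apply]⟩
  set σ : Equiv.Perm (ZMod (m k)) := Equiv.ofBijective _ hbij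
  have hσS : ∀ x, L k (S x) = σ (L k x) := hLS
  have hσ : σ.IsCycleOn (Finset.univ : Finset (ZMod (m k))) := by
    rw [Finset.coe_univ]
    refine ⟨σ.bijective.bijOn_univ, fun a _ b _ => ?_⟩
    obtain ⟨x, rfl⟩ := hSurj a
    obtain ⟨y, rfl⟩ := hSurj b
    obtain ⟨_, hz, n, rfl⟩ := (hSmin x).inter_open_nonempty _
      ((isOpen_discrete {L k y}).preimage (hLc k)) ⟨y, rfl⟩
    refine ⟨n, ?_⟩
    rw [← map_zpow_of_semiconj hσS]
    exact hz
  have hsum := sum_jump_eq_card_mul_orbitNumber (q := q) haper (hLT k)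
    (fun a => by obtain ⟨x, rfl⟩ := hSurj a; rw [← hq]; exact hp1 x)
    (fun x => by rw [← hq, hSp]) hσS hσ hc
  obtain ⟨F, hF⟩ := exists_coboundary_of_sum_eq_zero hσ (fun a => (q a : ℤ) - c) (by
    rw [Finset.sum_sub_distrib, Finset.sum_const, Finset.card_univ, ZMod.card, ← Nat.cast_sum,
      hsum]
    simp)
  refine ⟨fun x => F (L k x), (continuous_of_discreteTopology (f := F)).comp (hLc k), fun x => ?_⟩
  dsimp only
  rw [hq x, hσS]
  exact hF (L k x)
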